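/- Let a, c, λ be real numbers such that λ ≠ 0, λ is not a negative integer, and c is not zero or a negative integer. Then for every real x, the product of the two everywhere-convergent series (∑_{k=0}^{∞} (a)_k x^k / ((c)_k · k!)) · (∑_{k=0}^{∞} (1+λ)_k (a)_k (−x)^k / ((λ)_k (c)_k · k!)) equals ∑_{k=0}^{∞} (1+λ)_k (a)_k (c−a)_k (x²/4)^k / ((λ)_k (c)_k (c/2)_k ((1+c)/2)_k · k!) minus (a x/(c λ)) · ∑_{k=0}^{∞} (1+a)_k (c−a)_k (x²/4)^k / ((c)_k ((1+c)/2)_k ((2+c)/2)_k · k!). -/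

import Mathlib

/-- Real Pochhammer symbol: `(x)_0 = 1`, `(x)_n = x(x+1)⋯(x+n-1)`. -/
def poch (x : ℝ) (n : ℕ) : ℝ := ∏ i ∈ Finset.range n, (x + i)

/-!
Write `u = ₁F₁(a; c; X)`, `v = u(-X)` and `θ = X d/dX`. Since `(1 + l)ₙ / (l)ₙ = 1 + n / l`, the
second factor is `v + l⁻¹ θv`, so the product is `u v + l⁻¹ u θv`, where
`2 u θv = θ(u v) + W` with the Wronskian `W = u θv - θu v`. Kummer's equation
`θ(θ + c - 1) u = X (θ + a) u` and its image under `X ↦ -X` give a closed linear system of first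
order for `u v`, `θ(u v)`, `θu θv` and `W`, that is, recurrences linking the coefficients of `u v`
to those of `W`. As `u v` is even, the recurrences determine both series: the even coefficients of
`u v` are those of Bailey's product formula, and the odd ones of `W` produce the second sum.
-/

open Filter PowerSeries Topology
open scoped Nat

/-- The Pochhammer symbol `(x)ₙ`. -/
local notation:max x:max "⁽" n "⁾" => Polynomial.eval x (ascPochhammer _ n)

namespace KummerSeries

section RisingFactorial

theorem mul_ascPochhammer_eval_one_add {R : Type*} [CommSemiring R] (x : R) (n : ℕ) :
    x * (1 + x)⁽n⁾ = x⁽n + 1⁾ := by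
  simp [ascPochhammer_succ_left, Polynomial.eval_comp, add_comm]

variable {K : Type*} [Field K]

theorem ascPochhammer_eval_two_mul [NeZero (2 : K)] (x : K) (n : ℕ) :
    x⁽2 * n⁾ = 4 ^ n * (x / 2)⁽n⁾ * ((1 + x) / 2)⁽n⁾ := by
  induction n with
  | zero => simp
  | succ n ih =>
    simp only [mul_add_one, ascPochhammer_succ_eval, ih]
    push_cast
    field_simp
    ring

theorem ascPochhammer_eval_ne_zero {c : K} (hc : ∀ m : ℕ, c ≠ -m) (n : ℕ) : c⁽n⁾ ≠ 0 := by
  rw [Ne, ascPochhammer_eval_eq_zero_iff]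
  rintro ⟨m, -, hm⟩
  exact hc m (by rw [hm, neg_neg])

theorem add_natCast_ne_zero {c : K} (hc : ∀ m : ℕ, c ≠ -m) (n : ℕ) : c + n ≠ 0 :=
  fun h => hc n (eq_neg_of_add_eq_zero_left h)

theorem ascPochhammer_eval_one_add_div {x : K} (hx : ∀ m : ℕ, x ≠ -m) (n : ℕ) :
    (1 + x)⁽n⁾ / x⁽n⁾ = 1 + n / x := by
  have hx0 : x ≠ 0 := by simpa using hx 0
  have := ascPochhammer_eval_ne_zero hx n
  have h := mul_ascPochhammer_eval_one_add x n
  rw [ascPochhammer_succ_eval] at h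
  field_simp
  linear_combination h

end RisingFactorial

section Derivation

variable {R A : Type*} [CommRing R] [CommRing A] [Algebra R A] (D : Derivation R A A)

/-- The Wronskian `u * D v - D u * v`, with the sign convention of `Polynomial.wronskian`. -/
def wronskian (u v : A) : A := u * D v - D u * v

/-- Kummer's confluent hypergeometric equation with parameters `a` and `c`, in the form
`D (D + c - 1) u = x (D + a) u` that it takes for the Euler operator `D = x d/dx`. -/
def IsKummerSolution (x : A) (a c : R) (u : A) : Prop :=
  D (D u) + (c - 1) • D u = x * (D u + a • u)

theorem two_mul_mul_derivation (u v : A) : 2 * (u * D v) = D (u * v) + wronskian D u v := by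
  simp only [wronskian, Derivation.leibniz, smul_eq_mul]
  ring

variable {D} {x u v : A} {a c : R}

theorem IsKummerSolution.derivation_wronskian (hu : IsKummerSolution D x a c u)
    (hv : IsKummerSolution D (-x) a c v) :
    D (wronskian D u v) + (c - 1) • wronskian D u v =
      -(x * (D (u * v) + (2 * a) • (u * v))) := by
  simp only [IsKummerSolution, Algebra.smul_def, map_mul, map_ofNat] at hu hv ⊢
  simp only [wronskian, map_sub (f := D), Derivation.leibniz, smul_eq_mul]
  linear_combination u * hv - v * hu

theorem IsKummerSolution.derivation_derivation_mul (hu : IsKummerSolution D x a c u)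
    (hv : IsKummerSolution D (-x) a c v) :
    D (D (u * v)) + (c - 1) • D (u * v) = 2 * (D u * D v) - x * wronskian D u v := by
  simp only [IsKummerSolution, Algebra.smul_def] at hu hv ⊢
  simp only [wronskian, map_add, Derivation.leibniz, smul_eq_mul]
  linear_combination u * hv + v * hu

theorem IsKummerSolution.derivation_mul_derivation (hu : IsKummerSolution D x a c u)
    (hv : IsKummerSolution D (-x) a c v) :
    D (D u * D v) + (2 * (c - 1)) • (D u * D v) = a • (x * wronskian D u v) := by
  simp only [IsKummerSolution, Algebra.smul_def, map_mul, map_ofNat] at hu hv ⊢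
  simp only [wronskian, Derivation.leibniz, smul_eq_mul]
  linear_combination D u * hv + D v * hu

end Derivation

section EulerOperator

variable {R : Type*} [CommRing R]

/-- The Euler operator `X d/dX` on formal power series. -/
noncomputable def euler : Derivation R R⟦X⟧ R⟦X⟧ := (X : R⟦X⟧) • derivative R

theorem coeff_euler (f : R⟦X⟧) (n : ℕ) : coeff n (euler f) = n * coeff n f := by
  cases n with
  | zero => simp [euler]
  | succ n =>
    rw [euler, Derivation.smul_apply, smul_eq_mul, coeff_succ_X_mul, coeff_derivative]
    push_cast
    ring

theorem euler_rescale (r : R) (f : R⟦X⟧) : euler (rescale r f) = rescale r (euler f) := by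
  ext n
  simp only [coeff_euler, coeff_rescale]
  ring

theorem IsKummerSolution.rescale {x u : R⟦X⟧} {a c : R} (h : IsKummerSolution euler x a c u)
    (r : R) : IsKummerSolution euler (rescale r x) a c (PowerSeries.rescale r u) := by
  have smul_rescale (s : R) (f : R⟦X⟧) : s • PowerSeries.rescale r f =
      PowerSeries.rescale r (s • f) := by
    ext n
    simp only [coeff_smul, coeff_rescale, smul_eq_mul]
    ring
  simp only [IsKummerSolution, euler_rescale, smul_rescale, ← map_add, ← map_mul] at h ⊢
  rw [h]

variable {a c : R} {u v : R⟦X⟧}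

theorem IsKummerSolution.coeff_succ_wronskian (hu : IsKummerSolution euler X a c u)
    (hv : IsKummerSolution euler (-X) a c v) (n : ℕ) :
    (n + c) * coeff (n + 1) (wronskian euler u v) = -((n + 2 * a) * coeff n (u * v)) := by
  have h := congrArg (coeff (n + 1)) (hu.derivation_wronskian hv)
  simp only [map_add, map_neg, coeff_smul, smul_eq_mul, coeff_succ_X_mul, coeff_euler] at h
  push_cast at h
  linear_combination h

theorem IsKummerSolution.coeff_succ_mul (hu : IsKummerSolution euler X a c u)
    (hv : IsKummerSolution euler (-X) a c v) (n : ℕ) :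
    (n + 2 * c - 1) * (n + 1) * (n + c) * coeff (n + 1) (u * v) =
      -((n + 2 * (c - a) - 1) * coeff n (wronskian euler u v)) := by
  have hprod := congrArg (coeff (n + 1)) (hu.derivation_derivation_mul hv)
  have hderiv := congrArg (coeff (n + 1)) (hu.derivation_mul_derivation hv)
  rw [two_mul] at hprod
  simp only [map_add, map_sub, coeff_smul, smul_eq_mul, coeff_succ_X_mul, coeff_euler]
    at hprod hderiv
  push_cast at hprod hderiv
  linear_combination (n + 2 * c - 1) * hprod + 2 * hderiv

theorem IsKummerSolution.coeff_add_two_mul (hu : IsKummerSolution euler X a c u)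
    (hv : IsKummerSolution euler (-X) a c v) (n : ℕ) :
    (n + 2 * c) * (n + 2) * (n + 1 + c) * (n + c) * coeff (n + 2) (u * v) =
      (n + 2 * (c - a)) * (n + 2 * a) * coeff n (u * v) := by
  have hprod := hu.coeff_succ_mul hv (n + 1)
  have hwronskian := hu.coeff_succ_wronskian hv n
  push_cast at hprod
  linear_combination (n + c) * hprod - (n + 2 * (c - a)) * hwronskian

theorem coeff_eq_zero_of_rescale_neg_one_eq [IsAddTorsionFree R] {f : R⟦X⟧}
    (hf : rescale (-1) f = f) {n : ℕ} (hn : Odd n) : coeff n f = 0 := by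
  have h := congrArg (coeff n) hf
  rw [coeff_rescale, hn.neg_one_pow, neg_one_mul] at h
  exact self_eq_neg.mp h.symm

end EulerOperator

section Formal

variable {K : Type*} [Field K]

/-- The operator `1 + l⁻¹ θ`, with `θ` the Euler operator. It multiplies the `n`-th coefficient by
`1 + n / l = (1 + l)ₙ / (l)ₙ`, hence inserts the pair of parameters `1 + l; l` into a
hypergeometric series. -/
noncomputable def insertParameters (l : K) (f : K⟦X⟧) : K⟦X⟧ := f + l⁻¹ • euler f

theorem coeff_insertParameters (l : K) (f : K⟦X⟧) (n : ℕ) :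
    coeff n (insertParameters l f) = (1 + n / l) * coeff n f := by
  rw [insertParameters, map_add, coeff_smul, coeff_euler, smul_eq_mul]
  ring

theorem coeff_mul_insertParameters [NeZero (2 : K)] (l : K) (f g : K⟦X⟧) (n : ℕ) :
    coeff n (f * insertParameters l g) =
      (1 + n / (2 * l)) * coeff n (f * g) + coeff n (wronskian euler f g) / (2 * l) := by
  have h := congrArg (coeff n) (two_mul_mul_derivation euler f g)
  rw [two_mul, map_add, map_add, coeff_euler, ← mul_two, ← eq_div_iff two_ne_zero] at h
  rw [insertParameters, mul_add, mul_smul_comm, map_add, coeff_smul, smul_eq_mul, h]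
  ring

/-- Kummer's confluent hypergeometric function `₁F₁(a; c; X)` as a formal power series. -/
noncomputable def kummerSeries (a c : K) : K⟦X⟧ :=
  PowerSeries.mk fun n => a⁽n⁾ / (c⁽n⁾ * n !)

theorem coeff_kummerSeries (a c : K) (n : ℕ) :
    coeff n (kummerSeries a c) = a⁽n⁾ / (c⁽n⁾ * n !) :=
  coeff_mk _ _

variable [CharZero K] {c : K}

theorem coeff_succ_kummerSeries (a : K) (hc : ∀ m : ℕ, c ≠ -m) (n : ℕ) :
    coeff (n + 1) (kummerSeries a c) =
      (a + n) / ((c + n) * (n + 1)) * coeff n (kummerSeries a c) := by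
  have := ascPochhammer_eval_ne_zero hc n
  have := add_natCast_ne_zero hc n
  have : (n ! : K) ≠ 0 := by exact_mod_cast n.factorial_ne_zero
  have : (n : K) + 1 ≠ 0 := n.cast_add_one_ne_zero
  simp only [coeff_kummerSeries, ascPochhammer_succ_eval, Nat.factorial_succ]
  push_cast
  field_simp

theorem isKummerSolution_kummerSeries (a : K) (hc : ∀ m : ℕ, c ≠ -m) :
    IsKummerSolution euler X a c (kummerSeries a c) := by
  ext n
  cases n with
  | zero => simp [euler]
  | succ n =>
    have := add_natCast_ne_zero hc n
    have : (n : K) + 1 ≠ 0 := n.cast_add_one_ne_zero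
    simp only [map_add, coeff_smul, smul_eq_mul, coeff_succ_X_mul, coeff_euler,
      coeff_succ_kummerSeries a hc]
    push_cast
    field_simp
    ring

theorem isKummerSolution_rescale_neg_one_kummerSeries (a : K) (hc : ∀ m : ℕ, c ≠ -m) :
    IsKummerSolution euler (-X) a c (rescale (-1) (kummerSeries a c)) := by
  simpa only [rescale_neg_one_X] using (isKummerSolution_kummerSeries a hc).rescale (-1)

theorem coeff_odd_kummerSeries_mul_rescale (a c : K) {n : ℕ} (hn : Odd n) :
    coeff n (kummerSeries a c * rescale (-1) (kummerSeries a c)) = 0 :=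
  coeff_eq_zero_of_rescale_neg_one_eq (by simp [rescale_rescale, mul_comm]) hn

theorem coeff_two_mul_kummerSeries_mul_rescale (a : K) (hc : ∀ m : ℕ, c ≠ -m) (m : ℕ) :
    coeff (2 * m) (kummerSeries a c * rescale (-1) (kummerSeries a c)) =
      a⁽m⁾ * (c - a)⁽m⁾ / (c⁽m⁾ * c⁽2 * m⁾ * m !) := by
  induction m with
  | zero => simp [coeff_mul, coeff_kummerSeries]
  | succ m ih =>
    have hrec := (isKummerSolution_kummerSeries a hc).coeff_add_two_mul
      (isKummerSolution_rescale_neg_one_kummerSeries a hc) (2 * m)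
    have := ascPochhammer_eval_ne_zero hc m
    have := ascPochhammer_eval_ne_zero hc (2 * m)
    have := add_natCast_ne_zero hc m
    have : c + 2 * m ≠ 0 := by exact_mod_cast add_natCast_ne_zero hc (2 * m)
    have : c + (2 * m + 1) ≠ 0 := by exact_mod_cast add_natCast_ne_zero hc (2 * m + 1)
    have : (m ! : K) ≠ 0 := by exact_mod_cast m.factorial_ne_zero
    have : (m : K) + 1 ≠ 0 := m.cast_add_one_ne_zero
    simp only [mul_add_one, ascPochhammer_succ_eval, Nat.factorial_succ]
    push_cast at hrec ⊢
    rw [ih] at hrec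
    field_simp at hrec ⊢
    linear_combination hrec

theorem coeff_even_wronskian_kummerSeries (a : K) (hc : ∀ m : ℕ, c ≠ -m) {n : ℕ}
    (hn : Even n) :
    coeff n (wronskian euler (kummerSeries a c) (rescale (-1) (kummerSeries a c))) = 0 := by
  rcases n with _ | n
  · simp [wronskian, euler]
  · have hrec := (isKummerSolution_kummerSeries a hc).coeff_succ_wronskian
      (isKummerSolution_rescale_neg_one_kummerSeries a hc) n
    have hodd : Odd n := by simpa [Nat.even_add_one] using hn
    rw [coeff_odd_kummerSeries_mul_rescale a c hodd, mul_zero, neg_zero, add_comm] at hrec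
    exact (mul_eq_zero.mp hrec).resolve_left (add_natCast_ne_zero hc n)

theorem coeff_two_mul_add_one_wronskian_kummerSeries (a : K) (hc : ∀ m : ℕ, c ≠ -m) (m : ℕ) :
    coeff (2 * m + 1) (wronskian euler (kummerSeries a c) (rescale (-1) (kummerSeries a c))) =
      -(2 * (a⁽m + 1⁾ * (c - a)⁽m⁾ / (c⁽m⁾ * c⁽2 * m + 1⁾ * m !))) := by
  have hrec := (isKummerSolution_kummerSeries a hc).coeff_succ_wronskian
    (isKummerSolution_rescale_neg_one_kummerSeries a hc) (2 * m)
  have := ascPochhammer_eval_ne_zero hc m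
  have := ascPochhammer_eval_ne_zero hc (2 * m)
  have : c + 2 * m ≠ 0 := by exact_mod_cast add_natCast_ne_zero hc (2 * m)
  have : (m ! : K) ≠ 0 := by exact_mod_cast m.factorial_ne_zero
  rw [coeff_two_mul_kummerSeries_mul_rescale a hc] at hrec
  simp only [ascPochhammer_succ_eval]
  push_cast at hrec ⊢
  field_simp at hrec ⊢
  linear_combination hrec

theorem coeff_two_mul_kummerSeries_mul_insertParameters (a : K) (hc : ∀ m : ℕ, c ≠ -m) {l : K}
    (hl : ∀ m : ℕ, l ≠ -m) (m : ℕ) :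
    coeff (2 * m)
        (kummerSeries a c * insertParameters l (rescale (-1) (kummerSeries a c))) =
      (1 + l)⁽m⁾ * a⁽m⁾ * (c - a)⁽m⁾ /
        (l⁽m⁾ * c⁽m⁾ * (c / 2)⁽m⁾ * ((1 + c) / 2)⁽m⁾ * m !) / 4 ^ m := by
  rw [coeff_mul_insertParameters, coeff_even_wronskian_kummerSeries a hc (even_two_mul m),
    coeff_two_mul_kummerSeries_mul_rescale a hc, ascPochhammer_eval_two_mul, zero_div, add_zero,
    Nat.cast_mul, Nat.cast_two, mul_div_mul_left _ _ two_ne_zero,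
    ← ascPochhammer_eval_one_add_div hl]
  ring

theorem coeff_two_mul_add_one_kummerSeries_mul_insertParameters (a : K)
    (hc : ∀ m : ℕ, c ≠ -m) (l : K) (m : ℕ) :
    coeff (2 * m + 1)
        (kummerSeries a c * insertParameters l (rescale (-1) (kummerSeries a c))) =
      -(a / (c * l)) * ((1 + a)⁽m⁾ * (c - a)⁽m⁾ /
        (c⁽m⁾ * ((1 + c) / 2)⁽m⁾ * ((2 + c) / 2)⁽m⁾ * m !)) / 4 ^ m := by
  have hc_succ : c⁽2 * m + 1⁾ = c * (4 ^ m * ((1 + c) / 2)⁽m⁾ * ((2 + c) / 2)⁽m⁾) := by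
    rw [← mul_ascPochhammer_eval_one_add, ascPochhammer_eval_two_mul, ← add_assoc,
      one_add_one_eq_two]
  rw [coeff_mul_insertParameters, coeff_two_mul_add_one_wronskian_kummerSeries a hc,
    coeff_odd_kummerSeries_mul_rescale a c (odd_two_mul_add_one m), hc_succ,
    ← mul_ascPochhammer_eval_one_add]
  field_simp
  ring

end Formal

section Convergence

theorem summable_norm_of_succ_eq_mul {R : Type*} [SeminormedRing R] {f q : ℕ → R}
    (hf : ∀ n, f (n + 1) = q n * f n) (hq : Tendsto q atTop (𝓝 0)) : Summable (‖f ·‖) := by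
  have hsmall : ∀ᶠ n in atTop, ‖q n‖ ≤ 1 / 2 :=
    hq.norm.eventually_le_const (by norm_num)
  refine summable_of_ratio_norm_eventually_le (r := 1 / 2) (by norm_num) ?_
  filter_upwards [hsmall] with n hn
  rw [norm_norm, norm_norm, hf]
  exact (norm_mul_le _ _).trans (by gcongr)

theorem hasSum_coeff_mul_mul_pow {R : Type*} [NormedCommRing R] [CompleteSpace R] {f g : R⟦X⟧}
    {x : R} (hf : Summable fun n => ‖coeff n f * x ^ n‖)
    (hg : Summable fun n => ‖coeff n g * x ^ n‖) :
    HasSum (fun n => coeff n (f * g) * x ^ n)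
      ((∑' n, coeff n f * x ^ n) * ∑' n, coeff n g * x ^ n) := by
  have hcauchy (n : ℕ) : coeff n (f * g) * x ^ n =
      ∑ p ∈ Finset.HasAntidiagonal.antidiagonal n,
        coeff p.1 f * x ^ p.1 * (coeff p.2 g * x ^ p.2) := by
    rw [coeff_mul, Finset.sum_mul]
    refine Finset.sum_congr rfl fun p hp => ?_
    rw [← Finset.HasAntidiagonal.mem_antidiagonal.mp hp, pow_add]
    ring
  simp only [hcauchy, tsum_mul_tsum_eq_tsum_sum_antidiagonal_of_summable_norm hf hg]
  exact (summable_norm_sum_mul_antidiagonal_of_summable_norm hf hg).of_norm.hasSum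

theorem tsum_eq_tsum_even_add_tsum_odd {E : Type*} [NormedAddCommGroup E] [CompleteSpace E]
    {f : ℕ → E} (hf : Summable f) : ∑' n, f n = ∑' n, f (2 * n) + ∑' n, f (2 * n + 1) :=
  (tsum_even_add_odd (hf.comp_injective fun _ _ h => by simpa using h)
    (hf.comp_injective fun _ _ h => by simpa using h)).symm

variable {𝕜 : Type*} [RCLike 𝕜]

/-- Formal power series that converge absolutely at every point. -/
def IsEntire (f : 𝕜⟦X⟧) : Prop := ∀ x, Summable fun n => ‖coeff n f * x ^ n‖

theorem IsEntire.rescale {f : 𝕜⟦X⟧} (hf : IsEntire f) (r : 𝕜) :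
    IsEntire (PowerSeries.rescale r f) := fun x => by
  convert hf (r * x) using 3 with n
  rw [coeff_rescale, mul_pow, mul_right_comm, mul_comm]

theorem IsEntire.euler {f : 𝕜⟦X⟧} (hf : IsEntire f) : IsEntire (euler f) := fun x => by
  refine .of_nonneg_of_le (fun _ => norm_nonneg _) (fun n => ?_) (hf (2 * x))
  have hn : (n : ℝ) ≤ 2 ^ n := by exact_mod_cast Nat.lt_two_pow_self.le
  calc ‖coeff n (KummerSeries.euler f) * x ^ n‖ = n * ‖coeff n f * x ^ n‖ := by
        rw [coeff_euler, mul_assoc, norm_mul, RCLike.norm_natCast]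
    _ ≤ 2 ^ n * ‖coeff n f * x ^ n‖ := by gcongr
    _ = ‖coeff n f * (2 * x) ^ n‖ := by
        rw [mul_pow, mul_left_comm, norm_mul (2 ^ n), norm_pow, RCLike.norm_ofNat]

theorem IsEntire.insertParameters {f : 𝕜⟦X⟧} (hf : IsEntire f) (l : 𝕜) :
    IsEntire (insertParameters l f) := fun x => by
  refine .of_nonneg_of_le (fun _ => norm_nonneg _) (fun n => ?_)
    ((hf x).add ((hf.euler x).mul_left ‖l⁻¹‖))
  rw [KummerSeries.insertParameters, map_add, coeff_smul, smul_eq_mul, add_mul, mul_assoc,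
    ← norm_mul]
  exact norm_add_le _ _

theorem isEntire_kummerSeries (a : 𝕜) {c : 𝕜} (hc : ∀ m : ℕ, c ≠ -m) :
    IsEntire (kummerSeries a c) := fun x => by
  refine summable_norm_of_succ_eq_mul
    (q := fun n => (a + 1 * n) / (c + 1 * n) * (x * (1 / ((n : 𝕜) + 1)))) (fun n => ?_) ?_
  · rw [coeff_succ_kummerSeries a hc, pow_succ]
    have := add_natCast_ne_zero hc n
    field_simp
  · simpa using (tendsto_add_mul_div_add_mul_atTop_nhds a c 1 one_ne_zero).mul
      (tendsto_one_div_add_atTop_nhds_zero_nat.const_mul x)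

theorem IsEntire.tsum_mul_tsum {f g : 𝕜⟦X⟧} (hf : IsEntire f) (hg : IsEntire g) (x : 𝕜) :
    (∑' n, coeff n f * x ^ n) * ∑' n, coeff n g * x ^ n =
      ∑' n, coeff (2 * n) (f * g) * x ^ (2 * n) +
        ∑' n, coeff (2 * n + 1) (f * g) * x ^ (2 * n + 1) := by
  have hsum := hasSum_coeff_mul_mul_pow (hf x) (hg x)
  rw [← hsum.tsum_eq, tsum_eq_tsum_even_add_tsum_odd hsum.summable]

end Convergence

end KummerSeries

open KummerSeries

theorem stmt_5_general {𝕜 : Type*} [RCLike 𝕜] (a c l : 𝕜) (hl : ∀ m : ℕ, l ≠ -m)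
    (hc : ∀ m : ℕ, c ≠ -m) (x : 𝕜) :
    (∑' k : ℕ, a⁽k⁾ * x ^ k / (c⁽k⁾ * k !)) *
      (∑' k : ℕ, (1 + l)⁽k⁾ * a⁽k⁾ * (-x) ^ k / (l⁽k⁾ * c⁽k⁾ * k !)) =
    (∑' k : ℕ, (1 + l)⁽k⁾ * a⁽k⁾ * (c - a)⁽k⁾ * (x ^ 2 / 4) ^ k /
        (l⁽k⁾ * c⁽k⁾ * (c / 2)⁽k⁾ * ((1 + c) / 2)⁽k⁾ * k !)) -
      (a * x / (c * l)) *
        (∑' k : ℕ, (1 + a)⁽k⁾ * (c - a)⁽k⁾ * (x ^ 2 / 4) ^ k /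
          (c⁽k⁾ * ((1 + c) / 2)⁽k⁾ * ((2 + c) / 2)⁽k⁾ * k !)) := by
  set u := kummerSeries a c with hu
  set w := insertParameters l (rescale (-1) u) with hw
  have hu_entire : IsEntire u := isEntire_kummerSeries a hc
  have hw_entire : IsEntire w := (hu_entire.rescale (-1)).insertParameters l
  calc
    _ = (∑' k, coeff k u * x ^ k) * ∑' k, coeff k w * x ^ k := by
      congr 1 <;> refine tsum_congr fun k => ?_
      · rw [hu, coeff_kummerSeries, div_mul_eq_mul_div]
      · rw [hw, hu, coeff_insertParameters, coeff_rescale, coeff_kummerSeries,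
          ← ascPochhammer_eval_one_add_div hl, neg_pow x]
        ring
    _ = ∑' k, coeff (2 * k) (u * w) * x ^ (2 * k) +
          ∑' k, coeff (2 * k + 1) (u * w) * x ^ (2 * k + 1) :=
      hu_entire.tsum_mul_tsum hw_entire x
    _ = _ := by
      rw [sub_eq_add_neg, ← neg_mul, ← tsum_mul_left]
      congr 1 <;> refine tsum_congr fun k => ?_
      · rw [coeff_two_mul_kummerSeries_mul_insertParameters a hc hl, div_pow]
        ring
      · rw [coeff_two_mul_add_one_kummerSeries_mul_insertParameters a hc, div_pow]
        ring

theorem poch_eq_ascPochhammer_eval (x : ℝ) (n : ℕ) : poch x n = x⁽n⁾ := by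
  induction n with
  | zero => simp [poch]
  | succ n ih => rw [ascPochhammer_succ_eval, ← ih, poch, poch, Finset.prod_range_succ]

/-- Lemma 4 (product formula for `₁F₁` and `₂F₂` series): an extension of
Bailey's product formula with an extra linear factor. -/
theorem stmt_5 (a c lam : ℝ)
    (hlam : ∀ m : ℕ, lam ≠ -(m : ℝ))
    (hc : ∀ m : ℕ, c ≠ -(m : ℝ)) (x : ℝ) :
    (∑' k : ℕ, poch a k * x ^ k / (poch c k * k.factorial)) *
      (∑' k : ℕ, poch (1 + lam) k * poch a k * (-x) ^ k /
        (poch lam k * poch c k * k.factorial))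
    = (∑' k : ℕ, poch (1 + lam) k * poch a k * poch (c - a) k * (x ^ 2 / 4) ^ k /
        (poch lam k * poch c k * poch (c / 2) k * poch ((1 + c) / 2) k * k.factorial))
      - (a * x / (c * lam)) *
        (∑' k : ℕ, poch (1 + a) k * poch (c - a) k * (x ^ 2 / 4) ^ k /
          (poch c k * poch ((1 + c) / 2) k * poch ((2 + c) / 2) k * k.factorial)) := by
  simpa only [poch_eq_ascPochhammer_eval] using stmt_5_general a c lam hlam hc x
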